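/- The expected cost of the randomized online algorithm gCHASE_s^r, which equals Σ_{t=1}^T ( (1 − p_t)·g_t(0) + p_t·g_t(1) + β·(p_t − p_{t−1})^+ ) with p_t := (β + Δ(t))/β (and p_0 = 0), is at most 2·Opt, for every β > 0 and every choice of nonnegative cost functions g_1,…,g_T. Hence gCHASE_s^r has expected competitive ratio 2 for problem SP. -/

import Mathlib

/-- The cost of a schedule `s` (with states encoded as reals): the operating
cost at time `t` is `(1 - s t) * g0 t + s t * g1 t` (for a fractional state
`p_t` this is the expected operating cost `(1 − p_t)·g_t(0) + p_t·g_t(1)`),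
plus the switching cost `β·(s t − s (t−1))⁺`. -/
noncomputable def cost (T : ℕ) (β : ℝ) (g0 g1 : ℕ → ℝ) (s : ℕ → ℝ) : ℝ :=
  ∑ t ∈ Finset.Icc 1 T, ((1 - s t) * g0 t + s t * g1 t + β * max (s t - s (t - 1)) 0)

/-- The cumulative cost difference `Δ(t)`, with `Δ(0) = −β` and
`Δ(t) = min{0, max{−β, Δ(t−1) + (g_t(0) − g_t(1))}}`. -/
noncomputable def Δfun (β : ℝ) (g0 g1 : ℕ → ℝ) : ℕ → ℝ
  | 0 => -β
  | t + 1 => min 0 (max (-β) (Δfun β g0 g1 t + (g0 (t + 1) - g1 (t + 1))))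

/-- The offline optimal value `Opt` of problem SP: the infimum of costs over
all binary schedules starting in state `0`. -/
noncomputable def opt (T : ℕ) (β : ℝ) (g0 g1 : ℕ → ℝ) : ℝ :=
  sInf {c : ℝ | ∃ s : ℕ → ℝ, (∀ t, s t = 0 ∨ s t = 1) ∧ s 0 = 0 ∧ c = cost T β g0 g1 s}

/-!
The marginals `p t` perform projected gradient descent on `[0, 1]`: `p (t + 1)` is the projection of
`p t + δ (t + 1) / β`. The variational inequality of this projection lets one replace the
comparator's operating cost by that of the algorithm, which in turn pays for the algorithm's
movement. Hence along any comparator `s` with values in `[0, 1]` the potential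
`β * (p ^ 2 / 2 + 2 * s * (1 - p))` amortizes the cost of each time step to at most twice that of
the comparator.
-/

/-- The cost of one time step with operating costs `a` (in state `0`) and `b` (in state `1`), when
the state moves from `x` to `y`, a state in `[0, 1]` being the probability of state `1`. This is the
summand of `cost`. -/
noncomputable def stepCost (β a b x y : ℝ) : ℝ :=
  (1 - y) * a + y * b + β * max (y - x) 0

/-- The potential, in units of `β`, of the amortized analysis: `p` is the algorithm's state and `y`
the comparator's. It equals `(p - 2 * y) ^ 2 / 2 + 2 * y * (1 - y)`, so that its gradient in `p` is
the displacement from `2 * y`. -/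
noncomputable def potential (p y : ℝ) : ℝ :=
  p ^ 2 / 2 + 2 * y * (1 - p)

/-- The probability `p_t = (β + Δ(t)) / β` with which gCHASE_s^r is in state `1` at time `t`. -/
noncomputable def chaseProb (β : ℝ) (g0 g1 : ℕ → ℝ) (t : ℕ) : ℝ :=
  (β + Δfun β g0 g1 t) / β

theorem sub_clamp_mul_sub_clamp_nonpos {R : Type*} [Ring R] [LinearOrder R] [IsOrderedRing R]
    {l u y : R} (hy : y ∈ Set.Icc l u) (x : R) :
    (x - min u (max l x)) * (y - min u (max l x)) ≤ 0 := by
  obtain ⟨hly, hyu⟩ := hy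
  rcases le_total x l with hxl | hlx
  · rw [max_eq_left hxl, min_eq_right (hly.trans hyu)]
    exact mul_nonpos_of_nonpos_of_nonneg (sub_nonpos.2 hxl) (sub_nonneg.2 hly)
  · rw [max_eq_right hlx]
    rcases le_total u x with hux | hxu
    · rw [min_eq_left hux]
      exact mul_nonpos_of_nonneg_of_nonpos (sub_nonneg.2 hux) (sub_nonpos.2 hyu)
    · simp only [min_eq_right hxu, sub_self, zero_mul, le_refl]

theorem potential_nonneg {p y : ℝ} (hp : p ≤ 1) (hy : 0 ≤ y) : 0 ≤ potential p y := by
  have := sub_nonneg.2 hp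
  unfold potential
  positivity

section Step

variable {β a b p q x y : ℝ}

theorem mul_movement_le_operatingCost (ha : 0 ≤ a) (hb : 0 ≤ b) (hq : q ∈ Set.Icc 0 1)
    (hstep : β * (q - p) ^ 2 ≤ (a - b) * (q - p)) :
    β * ((1 - q) * max (q - p) 0 + q * max (p - q) 0) ≤ (1 - q) * a + q * b := by
  obtain ⟨hq0, hq1⟩ := hq
  have hq1' : 0 ≤ 1 - q := sub_nonneg.2 hq1
  rcases lt_trichotomy p q with hpq | rfl | hqp
  · have hgap : β * (q - p) ≤ a - b :=
      le_of_mul_le_mul_right (by linarith) (sub_pos.2 hpq)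
    rw [max_eq_left (by linarith), max_eq_right (by linarith)]
    linarith [mul_le_mul_of_nonneg_left hgap hq1']
  · simp only [sub_self, max_self, mul_zero, add_zero]
    positivity
  · have hgap : β * (p - q) ≤ b - a :=
      le_of_mul_le_mul_right (by linarith) (sub_pos.2 hqp)
    rw [max_eq_right (by linarith), max_eq_left (by linarith)]
    linarith [mul_le_mul_of_nonneg_left hgap hq0]

theorem movement_add_sq_sub_sq_le (p q : ℝ) :
    max (q - p) 0 + (q ^ 2 - p ^ 2) / 2 - 2 * q * (q - p) ≤
      (1 - q) * max (q - p) 0 + q * max (p - q) 0 := by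
  rcases le_total p q with hpq | hqp
  · rw [max_eq_left (by linarith), max_eq_right (by linarith)]
    linarith [sq_nonneg (q - p)]
  · rw [max_eq_right (by linarith), max_eq_left (by linarith)]
    linarith [sq_nonneg (q - p)]

theorem potential_le_potential_add_movement (hp : p ∈ Set.Icc 0 1) (x y : ℝ) :
    potential p y ≤ potential p x + 2 * max (y - x) 0 := by
  have hmove : (y - x) * (1 - p) ≤ max (y - x) 0 :=
    calc (y - x) * (1 - p) ≤ max (y - x) 0 * (1 - p) :=
          mul_le_mul_of_nonneg_right (le_max_left _ _) (sub_nonneg.2 hp.2)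
      _ ≤ max (y - x) 0 := mul_le_of_le_one_right (le_max_right _ _) (by linarith [hp.1])
  unfold potential
  linarith

theorem stepCost_add_potential_le_of_comparator_fixed (hβ : 0 ≤ β) (ha : 0 ≤ a) (hb : 0 ≤ b)
    (hp : p ∈ Set.Icc 0 1) (hq : q ∈ Set.Icc 0 1) (hy : y ∈ Set.Icc 0 1)
    (hproj : ∀ z ∈ Set.Icc (0 : ℝ) 1, (a - b) * (z - q) ≤ β * (q - p) * (z - q)) :
    stepCost β a b p q + β * potential q y ≤
      2 * ((1 - y) * a + y * b) + β * potential p y := by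
  have hstep : β * (q - p) ^ 2 ≤ (a - b) * (q - p) := by linarith [hproj p hp]
  have hmove := mul_movement_le_operatingCost ha hb hq hstep
  have hsq := mul_le_mul_of_nonneg_left (movement_add_sq_sub_sq_le p q) hβ
  have hcomparator := hproj y hy
  unfold stepCost potential
  linarith

theorem stepCost_add_potential_le (hβ : 0 ≤ β) (ha : 0 ≤ a) (hb : 0 ≤ b)
    (hp : p ∈ Set.Icc 0 1) (hq : q ∈ Set.Icc 0 1) (hy : y ∈ Set.Icc 0 1)
    (hproj : ∀ z ∈ Set.Icc (0 : ℝ) 1, (a - b) * (z - q) ≤ β * (q - p) * (z - q)) :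
    stepCost β a b p q + β * potential q y ≤
      2 * stepCost β a b x y + β * potential p x :=
  calc stepCost β a b p q + β * potential q y
      ≤ 2 * ((1 - y) * a + y * b) + β * potential p y :=
        stepCost_add_potential_le_of_comparator_fixed hβ ha hb hp hq hy hproj
    _ ≤ 2 * ((1 - y) * a + y * b) + β * (potential p x + 2 * max (y - x) 0) := by
        gcongr
        exact potential_le_potential_add_movement hp x y
    _ = 2 * stepCost β a b x y + β * potential p x := by
        unfold stepCost
        ring

end Step

section Chase

variable {T : ℕ} {β : ℝ} {g0 g1 s : ℕ → ℝ}

theorem cost_zero (β : ℝ) (g0 g1 s : ℕ → ℝ) : cost 0 β g0 g1 s = 0 := by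
  simp [cost]

theorem cost_succ (T : ℕ) (β : ℝ) (g0 g1 s : ℕ → ℝ) :
    cost (T + 1) β g0 g1 s =
      cost T β g0 g1 s + stepCost β (g0 (T + 1)) (g1 (T + 1)) (s T) (s (T + 1)) :=
  Finset.sum_Icc_succ_top (Nat.le_add_left 1 T) _

theorem le_opt {c : ℝ}
    (h : ∀ s : ℕ → ℝ, (∀ t, s t = 0 ∨ s t = 1) → s 0 = 0 → c ≤ cost T β g0 g1 s) :
    c ≤ opt T β g0 g1 := by
  refine le_csInf ⟨_, fun _ => 0, fun _ => Or.inl rfl, rfl, rfl⟩ ?_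
  rintro _ ⟨s, hs, hs0, rfl⟩
  exact h s hs hs0

theorem Δfun_mem_Icc (hβ : 0 ≤ β) (g0 g1 : ℕ → ℝ) (t : ℕ) :
    Δfun β g0 g1 t ∈ Set.Icc (-β) 0 := by
  cases t <;> simp [Δfun, hβ]

theorem chaseProb_zero (β : ℝ) (g0 g1 : ℕ → ℝ) : chaseProb β g0 g1 0 = 0 := by
  simp [chaseProb, Δfun]

theorem chaseProb_mem_Icc (hβ : 0 ≤ β) (g0 g1 : ℕ → ℝ) (t : ℕ) :
    chaseProb β g0 g1 t ∈ Set.Icc 0 1 := by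
  obtain ⟨hlower, hupper⟩ := Δfun_mem_Icc hβ g0 g1 t
  exact ⟨div_nonneg (by linarith) hβ, div_le_one_of_le₀ (by linarith) hβ⟩

theorem Δfun_eq_mul_chaseProb_sub (hβ : β ≠ 0) (g0 g1 : ℕ → ℝ) (t : ℕ) :
    Δfun β g0 g1 t = β * chaseProb β g0 g1 t - β := by
  rw [chaseProb, mul_div_cancel₀ _ hβ, add_sub_cancel_left]

theorem chaseProb_variational_inequality (hβ : 0 < β) (g0 g1 : ℕ → ℝ) (t : ℕ) {y : ℝ}
    (hy : y ∈ Set.Icc 0 1) :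
    (g0 (t + 1) - g1 (t + 1)) * (y - chaseProb β g0 g1 (t + 1)) ≤
      β * (chaseProb β g0 g1 (t + 1) - chaseProb β g0 g1 t) *
        (y - chaseProb β g0 g1 (t + 1)) := by
  have hmem : β * y - β ∈ Set.Icc (-β) 0 :=
    ⟨by linarith [mul_nonneg hβ.le hy.1], by linarith [mul_le_of_le_one_right hβ.le hy.2]⟩
  have hΔ : (Δfun β g0 g1 t + (g0 (t + 1) - g1 (t + 1)) - Δfun β g0 g1 (t + 1)) *
      (β * y - β - Δfun β g0 g1 (t + 1)) ≤ 0 :=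
    sub_clamp_mul_sub_clamp_nonpos hmem _
  rw [Δfun_eq_mul_chaseProb_sub hβ.ne', Δfun_eq_mul_chaseProb_sub hβ.ne'] at hΔ
  refine le_of_mul_le_mul_left ?_ hβ
  linarith

theorem cost_chaseProb_add_potential_le (hβ : 0 < β)
    (hg0 : ∀ t, 1 ≤ t → t ≤ T → 0 ≤ g0 t) (hg1 : ∀ t, 1 ≤ t → t ≤ T → 0 ≤ g1 t)
    (hs : ∀ t, s t ∈ Set.Icc 0 1) :
    cost T β g0 g1 (chaseProb β g0 g1) + β * potential (chaseProb β g0 g1 T) (s T) ≤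
      2 * cost T β g0 g1 s + β * potential 0 (s 0) := by
  induction T with
  | zero => simp only [cost_zero, chaseProb_zero, mul_zero, le_refl]
  | succ T ih =>
    have hprev := ih (fun t h1 hT => hg0 t h1 (Nat.le_succ_of_le hT))
      (fun t h1 hT => hg1 t h1 (Nat.le_succ_of_le hT))
    have hstep := stepCost_add_potential_le (x := s T) hβ.le
      (hg0 (T + 1) (Nat.le_add_left 1 T) le_rfl) (hg1 (T + 1) (Nat.le_add_left 1 T) le_rfl)
      (chaseProb_mem_Icc hβ.le g0 g1 T) (chaseProb_mem_Icc hβ.le g0 g1 (T + 1)) (hs (T + 1))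
      (fun _ hz => chaseProb_variational_inequality hβ g0 g1 T hz)
    rw [cost_succ, cost_succ]
    linarith

end Chase

theorem stmt4_general (T : ℕ) (β : ℝ) (hβ : 0 < β) (g0 g1 : ℕ → ℝ)
    (hg0 : ∀ t, 1 ≤ t → t ≤ T → 0 ≤ g0 t) (hg1 : ∀ t, 1 ≤ t → t ≤ T → 0 ≤ g1 t)
    (s : ℕ → ℝ) (hs : ∀ t, s t ∈ Set.Icc 0 1) (hs0 : s 0 = 0) :
    cost T β g0 g1 (chaseProb β g0 g1) ≤ 2 * cost T β g0 g1 s := by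
  have hamortized := cost_chaseProb_add_potential_le hβ hg0 hg1 hs
  have hfinal : 0 ≤ β * potential (chaseProb β g0 g1 T) (s T) :=
    mul_nonneg hβ.le (potential_nonneg (chaseProb_mem_Icc hβ.le g0 g1 T).2 (hs T).1)
  have hinitial : potential 0 (s 0) = 0 := by simp [potential, hs0]
  rw [hinitial, mul_zero, add_zero] at hamortized
  linarith

/-- the expected cost of the randomized online algorithm
gCHASE_s^r, namely `Σ_{t=1}^T ((1 − p_t)·g_t(0) + p_t·g_t(1) + β·(p_t − p_{t−1})⁺)`
with marginal probabilities `p_t = (β + Δ(t))/β` (note `p_0 = (β + Δ(0))/β = 0`),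
is at most `2·Opt`; hence gCHASE_s^r has expected competitive ratio 2. -/
theorem stmt4 (T : ℕ) (β : ℝ) (hβ : 0 < β) (g0 g1 : ℕ → ℝ)
    (hg0 : ∀ t, 1 ≤ t → t ≤ T → 0 ≤ g0 t) (hg1 : ∀ t, 1 ≤ t → t ≤ T → 0 ≤ g1 t) :
    cost T β g0 g1 (fun t => (β + Δfun β g0 g1 t) / β) ≤ 2 * opt T β g0 g1 := by
  rw [← div_le_iff₀' two_pos]
  refine le_opt fun s hs hs0 => (div_le_iff₀' two_pos).2 ?_
  exact stmt4_general T β hβ g0 g1 hg0 hg1 s (fun t => by rcases hs t with h | h <;> simp [h]) hs0
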